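/- Let n ≥ 2 and define the probability density f(y) = (1/B(1/2, (n−1)/2)) · n·e^{ny/2}/(1 + e^{ny})^{n/2} on ℝ. Then y ↦ y²·f(y) is integrable and the variance of f, namely ∫_ℝ y² f(y) dy − (∫_ℝ y f(y) dy)², equals (1/n²)·(ψ'((n−1)/2) + π²/2), where ψ'(t) is the second derivative of t ↦ log Γ(t) (the trigamma function). -/

import Mathlib

/-!
The variance is read off from the cumulant generating function. In the variable
`x = sigmoid (n y)` the density becomes a Beta density with parameters `1/2` and `b = (n - 1)/2`,
and multiplication by `e^{ty}` merely shifts these parameters by `± t/n` (`exp_mul_density`).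
The Beta integral therefore gives the moment generating function
`Γ(1/2 + t/n) Γ(b - t/n) / (Γ(1/2) Γ(b))` for `t` near `0` (`exp_mul_density_integral`).

Since exponential moments exist in a neighbourhood of `0`, all moments exist and the variance is the
second derivative at `0` of the logarithm of this function, that is
`(ψ'(1/2) + ψ'(b)) / n²` (`deriv_deriv_comp_affine`). Finally `ψ'(1/2) = π²/2` follows from
Euler's reflection formula (`trigammaFn_one_half`).
-/

open MeasureTheory Real

/-- The centered Logistic-Beta density
`f(y) = (1/B(1/2,(n-1)/2))·n·e^{ny/2}/(1+e^{ny})^{n/2}`, where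
`B(a,b) = Γ(a)Γ(b)/Γ(a+b)`. -/
noncomputable def logisticBetaDensity (n : ℕ) (y : ℝ) : ℝ :=
  (Real.Gamma ((n : ℝ) / 2) / (Real.Gamma (1 / 2) * Real.Gamma (((n : ℝ) - 1) / 2)))
    * ((n : ℝ) * Real.exp ((n : ℝ) * y / 2)
        / (1 + Real.exp ((n : ℝ) * y)) ^ ((n : ℝ) / 2))

/-- The trigamma function `ψ'`, realized as the second derivative of `t ↦ log Γ(t)`. -/
noncomputable def trigammaFn (t : ℝ) : ℝ :=
  deriv (deriv (fun s => Real.log (Real.Gamma s))) t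

open Filter Topology Set ProbabilityTheory

/-- The complex Gamma function is holomorphic on the right half-plane, so its restriction to the
positive reals is real-analytic; positivity of `Γ` there lets the logarithm pass through. -/
lemma analyticAt_log_Gamma {s : ℝ} (hs : 0 < s) :
    AnalyticAt ℝ (fun s => Real.log (Real.Gamma s)) s := by
  have hC : AnalyticAt ℂ Complex.Gamma (s : ℂ) := by
    have hopen : IsOpen {z : ℂ | 0 < z.re} := isOpen_lt continuous_const Complex.continuous_re
    have hd : DifferentiableOn ℂ Complex.Gamma {z : ℂ | 0 < z.re} := fun z hz =>
      (Complex.differentiableAt_Gamma z fun m h => by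
        have h0 : 0 < z.re := hz
        rw [h] at h0
        simp at h0
        have : (0 : ℝ) ≤ m := m.cast_nonneg
        linarith).differentiableWithinAt
    exact hd.analyticAt (hopen.mem_nhds (by simpa using hs))
  have hR : AnalyticAt ℝ (fun x : ℝ => (Complex.Gamma x).re) s := hC.re_ofReal
  have : (fun x : ℝ => (Complex.Gamma x).re) = Real.Gamma := by
    ext x; rw [Complex.Gamma_ofReal, Complex.ofReal_re]
  rw [this] at hR
  exact hR.log (Real.Gamma_pos_of_pos hs)

/-- The common shape of the reflection formula and of the cumulant generating function: both are,
near `0`, of the form `G (a + c t) + G (b - c t)` plus a constant with `G = log Γ`. The signs of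
the two inner derivatives cancel in the second derivative. -/
lemma deriv_deriv_comp_affine {G K : ℝ → ℝ} {a b c k : ℝ}
    (hGa : AnalyticAt ℝ G a) (hGb : AnalyticAt ℝ G b)
    (hK : K =ᶠ[𝓝 0] fun t => G (a + c * t) + G (b - c * t) + k) :
    deriv (deriv K) 0 = c ^ 2 * (deriv (deriv G) a + deriv (deriv G) b) := by
  have hla (t : ℝ) : HasDerivAt (fun t : ℝ => a + c * t) c t := by
    simpa using ((hasDerivAt_id t).const_mul c).const_add a
  have hlb (t : ℝ) : HasDerivAt (fun t : ℝ => b - c * t) (-c) t := by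
    simpa using ((hasDerivAt_id t).const_mul c).const_sub b
  have ta : Tendsto (fun t : ℝ => a + c * t) (𝓝 0) (𝓝 a) := by
    simpa using (hla 0).continuousAt.tendsto
  have tb : Tendsto (fun t : ℝ => b - c * t) (𝓝 0) (𝓝 b) := by
    simpa using (hlb 0).continuousAt.tendsto
  have h1 : deriv K =ᶠ[𝓝 0] fun t => c * (deriv G (a + c * t) - deriv G (b - c * t)) := by
    filter_upwards [hK.eventuallyEq_nhds, ta.eventually hGa.eventually_analyticAt,
      tb.eventually hGb.eventually_analyticAt] with t ht h₁ h₂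
    rw [ht.deriv_eq]
    have e₁ := h₁.differentiableAt.hasDerivAt.comp t (hla t)
    have e₂ := h₂.differentiableAt.hasDerivAt.comp t (hlb t)
    refine ((e₁.add e₂).add_const k).deriv.trans ?_
    ring
  rw [h1.deriv_eq]
  have e₁ := (hGa.deriv.differentiableAt.hasDerivAt (x := a)).comp_of_eq 0 (hla 0) (by simp)
  have e₂ := (hGb.deriv.differentiableAt.hasDerivAt (x := b)).comp_of_eq 0 (hlb 0) (by simp)
  refine ((e₁.sub e₂).const_mul c).deriv.trans ?_
  ring

/-- With `s = 1/2 + t`, the reflection formula reads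
`log Γ(1/2 + t) + log Γ(1/2 - t) = log π - log cos (π t)`; differentiating twice at `t = 0` gives
`2 ψ'(1/2) = π²`. -/
lemma trigammaFn_one_half : trigammaFn (1 / 2) = π ^ 2 / 2 := by
  have hG := analyticAt_log_Gamma (s := 1 / 2) (by norm_num)
  have hcos : ∀ᶠ t : ℝ in 𝓝 0, 0 < cos (π * t) := by
    have : ContinuousAt (fun t : ℝ => cos (π * t)) 0 := by fun_prop
    exact this.eventually (lt_mem_nhds (by simp))
  have hK : (fun t => -Real.log (cos (π * t))) =ᶠ[𝓝 0] fun t =>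
      Real.log (Real.Gamma (1 / 2 + 1 * t)) + Real.log (Real.Gamma (1 / 2 - 1 * t))
        + -Real.log π := by
    filter_upwards [hcos, Ioo_mem_nhds (show (-1 / 2 : ℝ) < 0 by norm_num)
      (show (0 : ℝ) < 1 / 2 by norm_num)] with t ht hI
    have h₁ := Real.Gamma_pos_of_pos (s := 1 / 2 + 1 * t) (by linarith [hI.1])
    have h₂ := Real.Gamma_pos_of_pos (s := 1 / 2 - 1 * t) (by linarith [hI.2])
    have hr := Real.Gamma_mul_Gamma_one_sub (1 / 2 + 1 * t)
    rw [show (1 : ℝ) - (1 / 2 + 1 * t) = 1 / 2 - 1 * t by ring,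
      show π * (1 / 2 + 1 * t) = π * t + π / 2 by ring, Real.sin_add_pi_div_two] at hr
    rw [← Real.log_mul h₁.ne' h₂.ne', hr, Real.log_div pi_ne_zero ht.ne']
    ring
  have h := deriv_deriv_comp_affine hG hG hK
  have hlin (t : ℝ) : HasDerivAt (fun t : ℝ => π * t) π t := by
    simpa using (hasDerivAt_id t).const_mul π
  have h1 : deriv (fun t => -Real.log (cos (π * t))) =ᶠ[𝓝 0] fun t => π * tan (π * t) := by
    filter_upwards [hcos] with t ht
    refine (((hlin t).cos.log ht.ne').neg).deriv.trans ?_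
    rw [Real.tan_eq_sin_div_cos]
    ring
  have h2 : deriv (fun t => π * tan (π * t)) 0 = π ^ 2 := by
    have := (Real.hasDerivAt_tan (x := π * 0) (by simp)).comp 0 (hlin 0)
    refine (this.const_mul π).deriv.trans ?_
    simp
    ring
  rw [h1.deriv_eq, h2] at h
  unfold trigammaFn
  linarith

/-- The real form of the Beta integral. -/
lemma beta_integral {p q : ℝ} (hp : 0 < p) (hq : 0 < q) :
    IntegrableOn (fun x : ℝ => x ^ (p - 1) * (1 - x) ^ (q - 1)) (Ioo 0 1) ∧
    ∫ x in Ioo (0 : ℝ) 1, x ^ (p - 1) * (1 - x) ^ (q - 1)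
      = Real.Gamma p * Real.Gamma q / Real.Gamma (p + q) := by
  have hc := Complex.betaIntegral_convergent (u := p) (v := q) (by simpa) (by simpa)
  rw [intervalIntegrable_iff_integrableOn_Ioo_of_le (by simp)] at hc
  have heq : ∀ x ∈ Ioo (0 : ℝ) 1, (((x : ℂ) ^ ((p : ℂ) - 1) * (1 - (x : ℂ)) ^ ((q : ℂ) - 1)).re)
      = x ^ (p - 1) * (1 - x) ^ (q - 1) := by
    intro x hx
    norm_cast
    rw [← Complex.ofReal_cpow hx.1.le, ← Complex.ofReal_cpow (by linarith [hx.2])]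
    norm_cast
  refine ⟨IntegrableOn.congr_fun hc.re heq measurableSet_Ioo, ?_⟩
  have hb := beta_eq_betaIntegralReal p q hp hq
  rw [beta] at hb
  rw [hb, Complex.betaIntegral, intervalIntegral.integral_of_le (by norm_num),
    integral_Ioc_eq_integral_Ioo, ← RCLike.re_to_complex, ← integral_re hc]
  exact (setIntegral_congr_fun measurableSet_Ioo heq).symm

/-- The Beta integral after the substitution `x = sigmoid (n y)`, which maps `ℝ` onto `(0, 1)` and
has derivative `n x (1 - x)`. -/
lemma sigmoid_integral {n p q : ℝ} (hn : 0 < n) (hp : 0 < p) (hq : 0 < q) :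
    Integrable (fun y : ℝ => n * (sigmoid (n * y) ^ p * (1 - sigmoid (n * y)) ^ q)) ∧
    ∫ y : ℝ, n * (sigmoid (n * y) ^ p * (1 - sigmoid (n * y)) ^ q)
      = Real.Gamma p * Real.Gamma q / Real.Gamma (p + q) := by
  have himg : (fun y : ℝ => sigmoid (n * y)) '' univ = Ioo 0 1 := by
    rw [image_univ, ← Real.range_sigmoid]
    exact (mul_left_surjective₀ hn.ne').range_comp sigmoid
  have hd : ∀ y ∈ (univ : Set ℝ), HasDerivWithinAt (fun y : ℝ => sigmoid (n * y))
      (sigmoid (n * y) * (1 - sigmoid (n * y)) * n) univ y := fun y _ => by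
    have hl : HasDerivAt (fun t : ℝ => n * t) n y := by
      simpa using (hasDerivAt_id y).const_mul n
    exact ((Real.hasDerivAt_sigmoid (n * y)).comp y hl).hasDerivWithinAt
  have hinj : InjOn (fun y : ℝ => sigmoid (n * y)) univ :=
    (Real.sigmoid_injective.comp (mul_right_injective₀ hn.ne')).injOn
  have heq : ∀ y : ℝ, |sigmoid (n * y) * (1 - sigmoid (n * y)) * n| •
      (sigmoid (n * y) ^ (p - 1) * (1 - sigmoid (n * y)) ^ (q - 1))
      = n * (sigmoid (n * y) ^ p * (1 - sigmoid (n * y)) ^ q) := by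
    intro y
    have h0 := Real.sigmoid_pos (n * y)
    have h1 : 0 < 1 - sigmoid (n * y) := by linarith [Real.sigmoid_lt_one (n * y)]
    rw [abs_of_pos (by positivity), smul_eq_mul, Real.rpow_sub_one h0.ne',
      Real.rpow_sub_one h1.ne']
    field_simp
  obtain ⟨hi, hv⟩ := beta_integral hp hq
  rw [← himg] at hi hv
  rw [integrableOn_image_iff_integrableOn_abs_deriv_smul MeasurableSet.univ hd hinj,
    integrableOn_univ] at hi
  rw [integral_image_eq_integral_abs_deriv_smul MeasurableSet.univ hd hinj,
    setIntegral_univ] at hv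
  simp only [heq] at hi hv
  exact ⟨hi, hv⟩

/-- The exponentially tilted density is again of Beta type in the variable `sigmoid (n y)`: tilting
by `t` shifts the exponents `1/2` and `(n - 1)/2` by `± t / n`. -/
lemma exp_mul_density {n : ℕ} (hn : 2 ≤ n) (t y : ℝ) :
    exp (t * y) * logisticBetaDensity n y
      = Real.Gamma ((n : ℝ) / 2) / (Real.Gamma (1 / 2) * Real.Gamma (((n : ℝ) - 1) / 2))
        * (n * (sigmoid (n * y) ^ (1 / 2 + (n : ℝ)⁻¹ * t)
          * (1 - sigmoid (n * y)) ^ (((n : ℝ) - 1) / 2 - (n : ℝ)⁻¹ * t))) := by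
  have hn0 : (n : ℝ) ≠ 0 := by positivity
  have hE := Real.exp_pos (n * y)
  have h1 : 1 - sigmoid (n * y) = (1 + exp (n * y))⁻¹ := by
    rw [← Real.sigmoid_neg, Real.sigmoid_def, neg_neg]
  have h0 : sigmoid (n * y) = exp (n * y) * (1 + exp (n * y))⁻¹ := by
    rw [← h1, ← Real.sigmoid_neg, ← Real.sigmoid_mul_rexp_neg, mul_left_comm, ← Real.exp_add]
    simp
  rw [h1, h0, Real.mul_rpow hE.le (by positivity), mul_assoc (_ ^ _),
    ← Real.rpow_add (by positivity),
    show 1 / 2 + (n : ℝ)⁻¹ * t + (((n : ℝ) - 1) / 2 - (n : ℝ)⁻¹ * t) = (n : ℝ) / 2 by ring,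
    Real.inv_rpow (by positivity), ← Real.exp_mul,
    show (n : ℝ) * y * (1 / 2 + (n : ℝ)⁻¹ * t) = t * y + n * y / 2 by field_simp; ring,
    Real.exp_add, logisticBetaDensity]
  ring

/-- The moment generating function of the density, for `t` in the strip where it converges. -/
lemma exp_mul_density_integral {n : ℕ} (hn : 2 ≤ n) {t : ℝ}
    (ha : 0 < 1 / 2 + (n : ℝ)⁻¹ * t) (hb : 0 < ((n : ℝ) - 1) / 2 - (n : ℝ)⁻¹ * t) :
    Integrable (fun y : ℝ => exp (t * y) * logisticBetaDensity n y) ∧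
    ∫ y : ℝ, exp (t * y) * logisticBetaDensity n y
      = Real.Gamma (1 / 2 + (n : ℝ)⁻¹ * t) * Real.Gamma (((n : ℝ) - 1) / 2 - (n : ℝ)⁻¹ * t)
        / (Real.Gamma (1 / 2) * Real.Gamma (((n : ℝ) - 1) / 2)) := by
  have hn2 : (2 : ℝ) ≤ n := by exact_mod_cast hn
  obtain ⟨hi, hv⟩ := sigmoid_integral (n := n) (by linarith) ha hb
  simp only [exp_mul_density hn]
  refine ⟨hi.const_mul _, ?_⟩
  rw [integral_const_mul, hv,
    show 1 / 2 + (n : ℝ)⁻¹ * t + (((n : ℝ) - 1) / 2 - (n : ℝ)⁻¹ * t) = (n : ℝ) / 2 by ring]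
  have := (Real.Gamma_pos_of_pos (s := (n : ℝ) / 2) (by linarith)).ne'
  field_simp

/-- For `n ≥ 2`, `y ↦ y²·f(y)` is integrable for the centered Logistic-Beta
density `f`, and the variance `∫ y² f(y) dy - (∫ y f(y) dy)²` equals
`(1/n²)(ψ'((n-1)/2) + π²/2)`. -/
theorem stmt8 (n : ℕ) (hn : 2 ≤ n) :
    Integrable (fun y : ℝ => y ^ 2 * logisticBetaDensity n y) ∧
    (∫ y : ℝ, y ^ 2 * logisticBetaDensity n y) - (∫ y : ℝ, y * logisticBetaDensity n y) ^ 2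
      = (1 / (n : ℝ) ^ 2) * (trigammaFn (((n : ℝ) - 1) / 2) + π ^ 2 / 2) := by
  have hn2 : (2 : ℝ) ≤ n := by exact_mod_cast hn
  have hb0 : 0 < ((n : ℝ) - 1) / 2 := by linarith
  have hΓa := Real.Gamma_pos_of_pos (s := 1 / 2) (by norm_num)
  have hΓb := Real.Gamma_pos_of_pos hb0
  have hpos : ∀ y, 0 ≤ logisticBetaDensity n y := fun y => by
    have := Real.Gamma_pos_of_pos (s := (n : ℝ) / 2) (by linarith)
    unfold logisticBetaDensity
    positivity
  have hmeas : Measurable (logisticBetaDensity n) := by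
    unfold logisticBetaDensity
    fun_prop
  set μ : Measure ℝ := volume.withDensity fun y => ENNReal.ofReal (logisticBetaDensity n y)
    with hμ
  -- Integrals against `μ` are integrals against the density, so that the theory of moment
  -- generating functions applies to the identity map on `(ℝ, μ)`.
  have hint (g : ℝ → ℝ) : ∫ y, g y ∂μ = ∫ y, g y * logisticBetaDensity n y := by
    rw [hμ, integral_withDensity_eq_integral_toReal_smul hmeas.ennreal_ofReal (by simp)]
    refine integral_congr_ae (.of_forall fun y => ?_)
    simp [ENNReal.toReal_ofReal (hpos y), mul_comm]
  have hintg (g : ℝ → ℝ) :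
      Integrable g μ ↔ Integrable (fun y => g y * logisticBetaDensity n y) := by
    rw [hμ, integrable_withDensity_iff hmeas.ennreal_ofReal (by simp)]
    simp only [ENNReal.toReal_ofReal (hpos _)]
  have hnear : ∀ᶠ t : ℝ in 𝓝 0, 0 < 1 / 2 + (n : ℝ)⁻¹ * t ∧
      0 < ((n : ℝ) - 1) / 2 - (n : ℝ)⁻¹ * t := by
    have c₁ : ContinuousAt (fun t : ℝ => 1 / 2 + (n : ℝ)⁻¹ * t) 0 := by fun_prop
    have c₂ : ContinuousAt (fun t : ℝ => ((n : ℝ) - 1) / 2 - (n : ℝ)⁻¹ * t) 0 := by fun_prop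
    exact (c₁.eventually (lt_mem_nhds (by simp))).and
      (c₂.eventually (lt_mem_nhds (by simpa using hb0)))
  have h0 : (0 : ℝ) ∈ interior (integrableExpSet id μ) := by
    rw [mem_interior_iff_mem_nhds]
    filter_upwards [hnear] with t ht
    exact (hintg _).2 (exp_mul_density_integral hn ht.1 ht.2).1
  have hK : cgf id μ =ᶠ[𝓝 0] fun t =>
      Real.log (Real.Gamma (1 / 2 + (n : ℝ)⁻¹ * t))
        + Real.log (Real.Gamma (((n : ℝ) - 1) / 2 - (n : ℝ)⁻¹ * t))
        + -Real.log (Real.Gamma (1 / 2) * Real.Gamma (((n : ℝ) - 1) / 2)) := by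
    filter_upwards [hnear] with t ht
    have h₁ := Real.Gamma_pos_of_pos ht.1
    have h₂ := Real.Gamma_pos_of_pos ht.2
    simp only [cgf, mgf, id]
    rw [hint, (exp_mul_density_integral hn ht.1 ht.2).2,
      Real.log_div (by positivity) (by positivity), Real.log_mul h₁.ne' h₂.ne']
    ring
  have hmgf0 : mgf id μ 0 = 1 := by
    simp only [mgf]
    rw [hint]
    have := (exp_mul_density_integral hn hnear.self_of_nhds.1 hnear.self_of_nhds.2).2
    simp only [id, this, mul_zero, add_zero, sub_zero]
    field_simp
  constructor
  · exact (hintg _).1 (integrable_pow_of_mem_interior_integrableExpSet h0 2)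
  · have hvar := iteratedDeriv_two_cgf h0
    have hder := deriv_deriv_comp_affine (analyticAt_log_Gamma (s := 1 / 2) (by norm_num))
      (analyticAt_log_Gamma hb0) hK
    rw [iteratedDeriv_succ, iteratedDeriv_one, hder, deriv_cgf h0, hmgf0] at hvar
    simp only [id, zero_mul, Real.exp_zero, mul_one, div_one] at hvar
    rw [hint, hint] at hvar
    rw [← hvar, ← trigammaFn_one_half]
    simp only [trigammaFn]
    rw [inv_pow]
    ring
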